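/- Let X be a reflexive Banach space, ψ:X→[0,∞] admissible (ψ(0)=0, convex, positively 1-homogeneous, lower semicontinuous, and there is c>0 with c|v| ≤ ψ(v) for all v), and R:[a,b]×X→[0,∞] a ψ-regular functional (for every t, R(t,·) convex, 1-homogeneous, l.s.c., R(t,0)=0; α*ψ ≤ R(t,·) ≤ α*ψ pointwise with 0<α_*≤α*; and |R(t,v)−R(s,v)| ≤ ψ(v)σ(t−s) for a modulus of continuity σ). For f:[a,b]→X, the following are equivalent: (1) f is absolutely continuous and ∫ₐᵇ R(τ, ḟ(τ))dτ < +∞; (2) f is absolutely continuous and ∫ₐᵇ ψ(ḟ(τ))dτ < +∞; (3) there exists a nonnegative m∈L¹(a,b) such that ψ(f(t)−f(s)) ≤ ∫ₛᵗ m(τ)dτ for all a≤s≤t≤b. -/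

import Mathlib

open MeasureTheory Set ENNReal

/-- `f` is absolutely continuous on `[a,b]` with derivative (density) `f'`. -/
def HasACDeriv {X : Type*} [NormedAddCommGroup X] [NormedSpace ℝ X] [CompleteSpace X]
    (a b : ℝ) (f f' : ℝ → X) : Prop :=
  IntervalIntegrable f' MeasureTheory.volume a b ∧
    ∀ t ∈ Set.Icc a b, f t = f a + ∫ τ in a..t, f' τ

open Filter Topology TopologicalSpace

/-!
Conditions (1) and (2) are equivalent because `R` is pinched between two positive multiples of `ψ`.

From (2) to (3), take `m = ψ ∘ f'`. Jensen's inequality for probability measures says that the mean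
of `(f', ψ ∘ f')` stays in the epigraph of `ψ`, which is closed and convex; homogeneity removes the
normalisation of the measure.

From (3) to (2), coercivity bounds `‖f t - f s‖` by a multiple of the integral of `m`, so that `f`
is absolutely continuous. In a reflexive space this makes `f` the integral of a derivative `f'`: at
almost every `t` the difference quotients of `f` are bounded by those of its variation, hence have
a weak limit `f' t` along an ultrafilter (Banach–Alaoglu). As `f'` lives in the closed span of the
curve, which is separable, and `φ ∘ f'` is almost everywhere the derivative of `φ ∘ f` for each
functional `φ`, the function `f'` is measurable by Pettis' theorem. Lower semicontinuity of `ψ`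
along difference quotients then gives `ψ ∘ f' ≤ m` almost everywhere.
-/

section Pettis

theorem exists_seq_dual_separating (𝕜 E : Type*) [RCLike 𝕜] [NormedAddCommGroup E]
    [NormedSpace 𝕜 E] [SeparableSpace E] :
    ∃ φ : ℕ → StrongDual 𝕜 E, Function.Injective fun x n ↦ φ n x := by
  choose φ hφ_norm hφ using fun n ↦ exists_dual_vector'' 𝕜 (denseSeq E n)
  refine ⟨φ, fun x y hxy ↦ sub_eq_zero.1 <| norm_le_zero_iff.1 <| le_of_forall_pos_lt_add ?_⟩
  intro ε hε
  obtain ⟨n, hn⟩ := Metric.denseRange_iff.1 (denseRange_denseSeq E) (x - y) (ε / 2) (half_pos hε)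
  rw [dist_eq_norm] at hn
  have h_vanish : φ n (x - y) = 0 := by rw [map_sub, sub_eq_zero]; exact congrFun hxy n
  have h_dense : ‖denseSeq E n‖ ≤ ‖x - y - denseSeq E n‖ :=
    calc ‖denseSeq E n‖ = ‖φ n (x - y - denseSeq E n)‖ := by
          rw [map_sub, h_vanish, zero_sub, norm_neg, hφ, RCLike.norm_ofReal, abs_norm]
      _ ≤ ‖x - y - denseSeq E n‖ := (φ n).le_of_opNorm_le_of_le (hφ_norm n) le_rfl |>.trans_eq
          (one_mul _)
  linarith [norm_le_norm_add_norm_sub' (x - y) (denseSeq E n)]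

variable {α 𝕜 E : Type*} [RCLike 𝕜] [NormedAddCommGroup E] [NormedSpace 𝕜 E] [CompleteSpace E]
  [MeasurableSpace α] {μ : Measure α} {g : α → E}

theorem aestronglyMeasurable_of_forall_dual_of_separableSpace [SeparableSpace E]
    (hg : ∀ φ : StrongDual 𝕜 E, AEMeasurable (fun x ↦ φ (g x)) μ) :
    AEStronglyMeasurable g μ := by
  borelize E
  have : SecondCountableTopology E := UniformSpace.secondCountable_of_separable E
  obtain ⟨φ, hφ⟩ := exists_seq_dual_separating 𝕜 E
  have h_emb : MeasurableEmbedding fun x n ↦ φ n x :=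
    Continuous.measurableEmbedding (by fun_prop) hφ
  have hg' : AEMeasurable g μ :=
    h_emb.aemeasurable_comp_iff.1 <| aemeasurable_pi_iff.2 fun n ↦ hg (φ n)
  exact hg'.aestronglyMeasurable

theorem aestronglyMeasurable_of_forall_dual {S : Set E}
    (hS : IsSeparable S) (hgS : ∀ᵐ x ∂μ, g x ∈ S)
    (hg : ∀ φ : StrongDual 𝕜 E, AEMeasurable (fun x ↦ φ (g x)) μ) :
    AEStronglyMeasurable g μ := by
  classical
  let Y : Submodule 𝕜 E := (Submodule.span 𝕜 S).topologicalClosure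
  have hY_closed : IsClosed (Y : Set E) := Submodule.isClosed_topologicalClosure _
  have : CompleteSpace Y := hY_closed.completeSpace_coe
  have : SeparableSpace Y := by
    refine IsSeparable.separableSpace (s := (Y : Set E)) ?_
    rw [Submodule.topologicalClosure_coe]
    exact (hS.span (R := 𝕜)).closure
  let h : α → Y := fun x ↦ if hx : g x ∈ Y then ⟨g x, hx⟩ else 0
  have hgh : ∀ᵐ x ∂μ, (h x : E) = g x := by
    filter_upwards [hgS] with x hx
    have hxY : g x ∈ Y := Submodule.le_topologicalClosure _ (Submodule.subset_span hx)
    simp only [h, dif_pos hxY]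
  have hh : AEStronglyMeasurable h μ := by
    refine aestronglyMeasurable_of_forall_dual_of_separableSpace (𝕜 := 𝕜) fun φ ↦ ?_
    obtain ⟨χ, hχ, -⟩ := exists_extension_norm_eq Y φ
    refine (hg χ).congr (hgh.mono fun x hx ↦ ?_)
    simp only [← hx, hχ]
  exact (continuous_subtype_val.comp_aestronglyMeasurable hh).congr hgh

end Pettis

section WeakLimits

variable {ι E : Type*} [NormedAddCommGroup E] [NormedSpace ℝ E] {l : Filter ι} {q : ι → E} {x : E}

theorem exists_forall_dual_tendsto_of_surjective_inclusionInDoubleDual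
    (hrefl : Function.Surjective (NormedSpace.inclusionInDoubleDual ℝ E)) (U : Ultrafilter ι)
    {C : ℝ} (hq : ∀ᶠ i in U, ‖q i‖ ≤ C) :
    ∃ x : E, ∀ φ : StrongDual ℝ E, Tendsto (fun i ↦ φ (q i)) U (𝓝 (φ x)) := by
  let Q : ι → WeakDual ℝ (StrongDual ℝ E) := fun i ↦
    StrongDual.toWeakDual (NormedSpace.inclusionInDoubleDual ℝ E (q i))
  have hQ : ∀ᶠ i in U, Q i ∈ WeakDual.toStrongDual ⁻¹' Metric.closedBall 0 C := by
    filter_upwards [hq] with i hi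
    exact (dist_zero_right (NormedSpace.inclusionInDoubleDual ℝ E (q i))).trans_le
      ((NormedSpace.double_dual_bound ℝ E (q i)).trans hi)
  obtain ⟨Φ, -, hΦ⟩ := (WeakDual.isCompact_closedBall (𝕜 := ℝ) 0 C).ultrafilter_le_nhds (U.map Q)
    (le_principal_iff.2 hQ)
  obtain ⟨x, hx⟩ := hrefl (WeakDual.toStrongDual Φ)
  refine ⟨x, fun φ ↦ ?_⟩
  have h_eval : Tendsto (fun i ↦ Q i φ) U (𝓝 (Φ φ)) :=
    ((WeakDual.eval_continuous φ).tendsto Φ).comp hΦ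
  have hΦx : Φ φ = φ x := by
    rw [← NormedSpace.dual_def ℝ E x φ, hx]; rfl
  rw [← hΦx]
  exact h_eval

theorem mem_of_forall_dual_tendsto [l.NeBot] {S : Set E} (hS_conv : Convex ℝ S)
    (hS_closed : IsClosed S) (hq : ∀ φ : StrongDual ℝ E, Tendsto (fun i ↦ φ (q i)) l (𝓝 (φ x)))
    (hqS : ∀ᶠ i in l, q i ∈ S) : x ∈ S := by
  by_contra hx
  obtain ⟨φ, u, hφS, hφx⟩ := geometric_hahn_banach_closed_point hS_conv hS_closed hx
  exact hφx.not_ge (le_of_tendsto (hq φ) (hqS.mono fun i hi ↦ (hφS _ hi).le))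

theorem norm_le_of_forall_dual_tendsto [l.NeBot] {r : ι → ℝ} {C : ℝ}
    (hq : ∀ φ : StrongDual ℝ E, Tendsto (fun i ↦ φ (q i)) l (𝓝 (φ x)))
    (hqr : ∀ᶠ i in l, ‖q i‖ ≤ r i) (hr : Tendsto r l (𝓝 C)) : ‖x‖ ≤ C := by
  obtain ⟨φ, hφ_norm, hφ⟩ := exists_dual_vector'' ℝ x
  calc ‖x‖ = φ x := hφ.symm
    _ ≤ C := le_of_tendsto_of_tendsto (hq φ) hr <| hqr.mono fun i hi ↦
      (le_abs_self _).trans <| ((φ.le_of_opNorm_le_of_le hφ_norm hi).trans_eq (one_mul _))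

theorem exists_mem_forall_hasDerivAt_dual
    (hrefl : Function.Surjective (NormedSpace.inclusionInDoubleDual ℝ E))
    {S : Set E} (hS_conv : Convex ℝ S) (hS_closed : IsClosed S) {f : ℝ → E} {V : ℝ → ℝ} {v t : ℝ}
    (hV : HasDerivAt V v t) (hfV : ∀ᶠ u in 𝓝[≠] t, ‖slope f t u‖ ≤ slope V t u)
    (hfS : ∀ᶠ u in 𝓝[≠] t, slope f t u ∈ S) :
    ∃ x ∈ S, ‖x‖ ≤ v ∧
      ∀ (φ : StrongDual ℝ E) (d : ℝ), HasDerivAt (fun u ↦ φ (f u)) d t → φ x = d := by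
  let U : Ultrafilter ℝ := Ultrafilter.of (𝓝[≠] t)
  have hU : (U : Filter ℝ) ≤ 𝓝[≠] t := Ultrafilter.of_le _
  have hV_slope := hasDerivAt_iff_tendsto_slope.1 hV
  obtain ⟨x, hx⟩ := exists_forall_dual_tendsto_of_surjective_inclusionInDoubleDual hrefl U
    (q := slope f t) (C := v + 1) <| hU <| by
      filter_upwards [hfV, hV_slope.eventually_le_const (lt_add_one v)] using fun u ↦ le_trans
  refine ⟨x, mem_of_forall_dual_tendsto hS_conv hS_closed hx (hU hfS),
    norm_le_of_forall_dual_tendsto hx (hU hfV) (hV_slope.mono_left hU), fun φ d hd ↦ ?_⟩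
  refine tendsto_nhds_unique (hx φ) <|
    ((hasDerivAt_iff_tendsto_slope.1 hd).mono_left hU).congr fun u ↦ ?_
  simp only [slope_def_module, map_smul, map_sub]

end WeakLimits

section AbsolutelyContinuous

theorem absolutelyContinuousOnInterval_of_dist_le {X Y : Type*} [PseudoMetricSpace X]
    [PseudoMetricSpace Y] {f : ℝ → X} {F : ℝ → Y} {a b : ℝ}
    (hF : AbsolutelyContinuousOnInterval F a b) (C : ℝ)
    (h : ∀ s ∈ uIcc a b, ∀ t ∈ uIcc a b, dist (f s) (f t) ≤ C * dist (F s) (F t)) :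
    AbsolutelyContinuousOnInterval f a b := by
  refine squeeze_zero' (Eventually.of_forall fun _ ↦ Finset.sum_nonneg fun _ _ ↦ dist_nonneg) ?_
    ((Tendsto.const_mul C hF).trans_eq (by rw [mul_zero]))
  filter_upwards [mem_inf_of_right (mem_principal_self _)] with E hE
  rw [Finset.mul_sum]
  exact Finset.sum_le_sum fun i hi ↦ h _ (hE.1 i hi).1 _ (hE.1 i hi).2

theorem absolutelyContinuousOnInterval_of_coercive_le {E : Type*} [NormedAddCommGroup E]
    {ψ : E → ℝ≥0∞} {f : ℝ → E} {M : ℝ → ℝ} {a b c : ℝ} (hc : 0 < c)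
    (hψcoer : ∀ v : E, ENNReal.ofReal (c * ‖v‖) ≤ ψ v) (hab : a ≤ b)
    (hM : AbsolutelyContinuousOnInterval M a b)
    (h : ∀ s t, a ≤ s → s ≤ t → t ≤ b → ψ (f t - f s) ≤ ENNReal.ofReal (M t - M s)) :
    AbsolutelyContinuousOnInterval f a b := by
  refine absolutelyContinuousOnInterval_of_dist_le hM c⁻¹ ?_
  rw [uIcc_of_le hab]
  intro s hs t ht
  wlog hst : s ≤ t generalizing s t
  · rw [dist_comm (f s), dist_comm (M s)]
    exact this t ht s hs (le_of_not_ge hst)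
  have h_le : ENNReal.ofReal (c * ‖f t - f s‖) ≤ ENNReal.ofReal |M t - M s| :=
    (hψcoer _).trans <| (h s t hs.1 hst ht.2).trans <| ofReal_le_ofReal <| le_abs_self _
  rw [dist_comm (f s), dist_comm (M s), dist_eq_norm, Real.dist_eq, le_inv_mul_iff₀ hc]
  exact (ofReal_le_ofReal_iff (abs_nonneg _)).1 h_le

theorem dist_le_variationOnFromTo_sub {α E : Type*} [LinearOrder α] [PseudoMetricSpace E]
    {f : α → E} {s : Set α} (hf : LocallyBoundedVariationOn f s) {a b c : α} (ha : a ∈ s)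
    (hb : b ∈ s) (hc : c ∈ s) (hbc : b ≤ c) :
    dist (f b) (f c) ≤ variationOnFromTo f s a c - variationOnFromTo f s a b := by
  rw [variationOnFromTo.sub_right hf ha hc hb, variationOnFromTo.eq_of_le f s hbc]
  exact (hf b c hb hc).dist_le ⟨hb, left_mem_Icc.2 hbc⟩ ⟨hc, right_mem_Icc.2 hbc⟩

end AbsolutelyContinuous

section RadonNikodym

variable {E : Type*} [NormedAddCommGroup E] [NormedSpace ℝ E] {f : ℝ → E} {a b : ℝ}

theorem norm_slope_le_slope {V : ℝ → ℝ} {s : Set ℝ}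
    (hfV : ∀ x ∈ s, ∀ y ∈ s, x ≤ y → dist (f x) (f y) ≤ V y - V x) {t u : ℝ} (ht : t ∈ s)
    (hu : u ∈ s) : ‖slope f t u‖ ≤ slope V t u := by
  wlog htu : t ≤ u generalizing t u
  · rw [slope_comm f, slope_comm V]
    exact this hu ht (le_of_not_ge htu)
  have h0 : 0 ≤ (u - t)⁻¹ := inv_nonneg.2 (sub_nonneg.2 htu)
  rw [slope_def_module, slope_def_module, norm_smul, Real.norm_of_nonneg h0, smul_eq_mul,
    ← dist_eq_norm, dist_comm]
  exact mul_le_mul_of_nonneg_left (hfV t ht u hu htu) h0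

theorem absolutelyContinuousOnInterval_dual (hf : AbsolutelyContinuousOnInterval f a b)
    (φ : StrongDual ℝ E) : AbsolutelyContinuousOnInterval (fun t ↦ φ (f t)) a b :=
  absolutelyContinuousOnInterval_of_dist_le hf ‖φ‖ fun _ _ _ _ ↦ φ.dist_le_opNorm _ _

theorem ae_Icc_mem_nhds (a b : ℝ) : ∀ᵐ t, t ∈ Icc a b → Icc a b ∈ 𝓝 t := by
  filter_upwards [Measure.ae_ne volume a, Measure.ae_ne volume b] with t hta htb ht
  exact Icc_mem_nhds (ht.1.lt_of_ne' hta) (ht.2.lt_of_ne htb)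

theorem exists_ae_forall_hasDerivAt_dual
    (hrefl : Function.Surjective (NormedSpace.inclusionInDoubleDual ℝ E))
    (hf : BoundedVariationOn f (uIcc a b)) {S : Set E} (hS_conv : Convex ℝ S)
    (hS_closed : IsClosed S) (hS : ∀ t ∈ uIcc a b, ∀ u ∈ uIcc a b, slope f t u ∈ S) :
    ∃ (g : ℝ → E) (k : ℝ → ℝ), IntervalIntegrable k volume a b ∧
      ∀ᵐ t, t ∈ uIcc a b → g t ∈ S ∧ ‖g t‖ ≤ k t ∧ ∀ (φ : StrongDual ℝ E) (d : ℝ),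
        HasDerivAt (fun u ↦ φ (f u)) d t → φ (g t) = d := by
  let V := variationOnFromTo f (uIcc a b) a
  have hf_loc := hf.locallyBoundedVariationOn
  have hV_mono : MonotoneOn V (uIcc a b) := variationOnFromTo.monotoneOn hf_loc left_mem_uIcc
  have h_pointwise : ∀ᵐ t, ∃ x, t ∈ uIcc a b → x ∈ S ∧ ‖x‖ ≤ deriv V t ∧
      ∀ (φ : StrongDual ℝ E) (d : ℝ), HasDerivAt (fun u ↦ φ (f u)) d t → φ x = d := by
    filter_upwards [hV_mono.ae_differentiableWithinAt_of_mem, ae_Icc_mem_nhds (min a b) (max a b)]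
      with t hVt h_nhds
    by_cases ht : t ∈ uIcc a b
    · have h_ev : ∀ᶠ u in 𝓝[≠] t, u ∈ uIcc a b := mem_nhdsWithin_of_mem_nhds (h_nhds ht)
      obtain ⟨x, hx⟩ := exists_mem_forall_hasDerivAt_dual hrefl hS_conv hS_closed
        ((hVt ht).differentiableAt (h_nhds ht)).hasDerivAt
        (h_ev.mono fun u hu ↦ norm_slope_le_slope
          (fun x hx y hy ↦ dist_le_variationOnFromTo_sub hf_loc left_mem_uIcc hx hy) ht hu)
        (h_ev.mono fun u hu ↦ hS t ht u hu)
      exact ⟨x, fun _ ↦ hx⟩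
    · exact ⟨0, fun h ↦ absurd h ht⟩
  obtain ⟨g, hg⟩ := h_pointwise.choice
  exact ⟨g, deriv V, hV_mono.intervalIntegrable_deriv, hg⟩

theorem aestronglyMeasurable_of_forall_dual_eq_deriv [CompleteSpace E]
    {g : ℝ → E} {S : Set E} (hS : IsSeparable S)
    (hgS : ∀ᵐ t, t ∈ uIcc a b → g t ∈ S)
    (hg : ∀ φ : StrongDual ℝ E, ∀ᵐ t, t ∈ uIcc a b → φ (g t) = deriv (fun u ↦ φ (f u)) t) :
    AEStronglyMeasurable g (volume.restrict (uIcc a b)) := by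
  refine aestronglyMeasurable_of_forall_dual (𝕜 := ℝ) hS
    ((ae_restrict_iff' measurableSet_uIcc).2 hgS) fun φ ↦ ?_
  refine (measurable_deriv fun u ↦ φ (f u)).aemeasurable.congr ?_
  filter_upwards [(ae_restrict_iff' measurableSet_uIcc).2 (hg φ)] with t ht using ht.symm

theorem sub_eq_integral_of_forall_dual_eq_deriv [CompleteSpace E]
    (hf : AbsolutelyContinuousOnInterval f a b) {g : ℝ → E}
    (hg_int : IntervalIntegrable g volume a b)
    (hg : ∀ φ : StrongDual ℝ E, ∀ᵐ t, t ∈ uIcc a b → φ (g t) = deriv (fun u ↦ φ (f u)) t) :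
    f b - f a = ∫ τ in a..b, g τ := by
  refine (SeparatingDual.eq_iff_forall_dual_eq (R := ℝ)).2 fun φ ↦ ?_
  rw [← φ.intervalIntegral_comp_comm hg_int, map_sub,
    ← (absolutelyContinuousOnInterval_dual hf φ).integral_deriv_eq_sub]
  refine intervalIntegral.integral_congr_ae ?_
  filter_upwards [hg φ] with t ht ht_mem using (ht (uIoc_subset_uIcc ht_mem)).symm

theorem exists_intervalIntegrable_forall_sub_eq_integral [CompleteSpace E]
    (hrefl : Function.Surjective (NormedSpace.inclusionInDoubleDual ℝ E))
    (hf : AbsolutelyContinuousOnInterval f a b) :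
    ∃ g : ℝ → E, IntervalIntegrable g volume a b ∧
      ∀ t ∈ uIcc a b, f t - f a = ∫ τ in a..t, g τ := by
  let Y : Submodule ℝ E := (Submodule.span ℝ (f '' uIcc a b)).topologicalClosure
  have hY_closed : IsClosed (Y : Set E) := Submodule.isClosed_topologicalClosure _
  have hY_sep : IsSeparable (Y : Set E) := by
    rw [Submodule.topologicalClosure_coe]
    exact ((isCompact_uIcc.image_of_continuousOn hf.continuousOn).isSeparable.span (R := ℝ)).closure
  have hfY : ∀ t ∈ uIcc a b, f t ∈ Y := fun t ht ↦
    Submodule.le_topologicalClosure _ (Submodule.subset_span (mem_image_of_mem f ht))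
  obtain ⟨g, k, hk, hg⟩ := exists_ae_forall_hasDerivAt_dual hrefl hf.boundedVariationOn Y.convex
    hY_closed fun t ht u hu ↦ Y.smul_mem _ (Y.sub_mem (hfY u hu) (hfY t ht))
  have hg_dual : ∀ φ : StrongDual ℝ E, ∀ᵐ t, t ∈ uIcc a b →
      φ (g t) = deriv (fun u ↦ φ (f u)) t := by
    intro φ
    filter_upwards [hg, (absolutelyContinuousOnInterval_dual hf φ).ae_differentiableAt]
      with t hgt h_diff ht using (hgt ht).2.2 φ _ (h_diff ht).hasDerivAt
  have hg_meas : AEStronglyMeasurable g (volume.restrict (uIcc a b)) :=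
    aestronglyMeasurable_of_forall_dual_eq_deriv hY_sep
      (hg.mono fun t ht ht_mem ↦ (ht ht_mem).1) hg_dual
  have hg_int : IntervalIntegrable g volume a b := by
    refine hk.mono_fun' (hg_meas.mono_set uIoc_subset_uIcc) ?_
    refine (ae_restrict_iff' measurableSet_uIoc).2 (hg.mono fun t ht ht_mem ↦ ?_)
    exact (ht (uIoc_subset_uIcc ht_mem)).2.1
  refine ⟨g, hg_int, fun t ht ↦ ?_⟩
  have h_sub : uIcc a t ⊆ uIcc a b := uIcc_subset_uIcc_left ht
  exact sub_eq_integral_of_forall_dual_eq_deriv (hf.mono h_sub) (hg_int.mono_set h_sub)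
    fun φ ↦ (hg_dual φ).mono fun τ hτ hτ_mem ↦ hτ (h_sub hτ_mem)

end RadonNikodym

section HasACDeriv

variable {E : Type*} [NormedAddCommGroup E] [NormedSpace ℝ E] [CompleteSpace E] {f f' : ℝ → E}
  {a b : ℝ}

theorem exists_hasACDeriv_of_absolutelyContinuousOnInterval
    (hrefl : Function.Surjective (NormedSpace.inclusionInDoubleDual ℝ E))
    (hf : AbsolutelyContinuousOnInterval f a b) : ∃ f', HasACDeriv a b f f' := by
  obtain ⟨g, hg_int, hg⟩ := exists_intervalIntegrable_forall_sub_eq_integral hrefl hf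
  refine ⟨g, hg_int, fun t ht ↦ ?_⟩
  rw [← hg t (Icc_subset_uIcc ht), add_sub_cancel]

theorem HasACDeriv.sub_eq_integral (hf : HasACDeriv a b f f') {s t : ℝ} (hs : s ∈ Icc a b)
    (ht : t ∈ Icc a b) : f t - f s = ∫ τ in s..t, f' τ := by
  have h_int : ∀ u ∈ Icc a b, IntervalIntegrable f' volume a u := fun u hu ↦
    hf.1.mono_set (uIcc_subset_uIcc_left (Icc_subset_uIcc hu))
  rw [hf.2 t ht, hf.2 s hs, add_sub_add_left_eq_sub,
    intervalIntegral.integral_interval_sub_left (h_int t ht) (h_int s hs)]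

theorem HasACDeriv.ae_hasDerivAt (hf : HasACDeriv a b f f') :
    ∀ᵐ t, t ∈ Icc a b → HasDerivAt f (f' t) t := by
  filter_upwards [hf.1.ae_hasDerivAt_integral, ae_Icc_mem_nhds a b] with t h_deriv h_nhds ht
  refine ((h_deriv (Icc_subset_uIcc ht) a left_mem_uIcc).const_add (f a)).congr_of_eventuallyEq ?_
  filter_upwards [h_nhds ht] using hf.2

end HasACDeriv

section LowerIntegral

variable {α : Type*} [MeasurableSpace α] {μ : Measure α}

theorem aemeasurable_comp_of_lowerSemicontinuous {E : Type*} [TopologicalSpace E]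
    [PseudoMetrizableSpace E] {ψ : E → ℝ≥0∞} {g : α → E} (hψlsc : LowerSemicontinuous ψ)
    (hg : AEStronglyMeasurable g μ) : AEMeasurable (fun x ↦ ψ (g x)) μ := by
  borelize E
  exact hψlsc.measurable.comp_aemeasurable hg.aemeasurable

theorem lintegral_lt_top_iff_of_mul_le_of_le_mul {F G : α → ℝ≥0∞} {c C : ℝ≥0∞} (hc : c ≠ 0)
    (hC : C ≠ ⊤) (h_lower : ∀ᵐ x ∂μ, c * F x ≤ G x) (h_upper : ∀ᵐ x ∂μ, G x ≤ C * F x) :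
    ∫⁻ x, G x ∂μ < ⊤ ↔ ∫⁻ x, F x ∂μ < ⊤ := by
  constructor <;> intro h_fin
  · have h_mul : c * ∫⁻ x, F x ∂μ < ⊤ :=
      ((lintegral_const_mul_le c F).trans (lintegral_mono_ae h_lower)).trans_lt h_fin
    exact ENNReal.lt_top_of_mul_ne_top_right h_mul.ne hc
  · calc ∫⁻ x, G x ∂μ ≤ ∫⁻ x, C * F x ∂μ := lintegral_mono_ae h_upper
      _ = C * ∫⁻ x, F x ∂μ := lintegral_const_mul' C F hC
      _ < ⊤ := mul_lt_top hC.lt_top h_fin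

end LowerIntegral

section Homogeneous

/-- Convexity of a functional with values in `[0, ∞]`; `ConvexOn ℝ univ ψ` does not typecheck, as
`ℝ≥0∞` is not an `ℝ`-module. -/
def IsConvexFunctional {E : Type*} [AddCommGroup E] [Module ℝ E] (ψ : E → ℝ≥0∞) : Prop :=
  ∀ u v : E, ∀ θ : ℝ, θ ∈ Icc (0:ℝ) 1 →
    ψ (θ • u + (1 - θ) • v) ≤ ENNReal.ofReal θ * ψ u + ENNReal.ofReal (1 - θ) * ψ v

/-- Positive 1-homogeneity of a functional with values in `[0, ∞]`. The value at `0` is left free: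
it may be `∞`. -/
def IsPosHomogeneous {E : Type*} [AddCommGroup E] [Module ℝ E] (ψ : E → ℝ≥0∞) : Prop :=
  ∀ l : ℝ, 0 < l → ∀ v : E, ψ (l • v) = ENNReal.ofReal l * ψ v

variable {E : Type*} [NormedAddCommGroup E] [NormedSpace ℝ E] {ψ : E → ℝ≥0∞}

theorem le_ofReal_deriv_of_eventually_sub_le
    (hψhom : IsPosHomogeneous ψ) (hψlsc : LowerSemicontinuous ψ) {f : ℝ → E}
    {M : ℝ → ℝ} {v : E} {m t : ℝ} (hf : HasDerivAt f v t) (hM : HasDerivAt M m t)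
    (h : ∀ᶠ u in 𝓝[>] t, ψ (f u - f t) ≤ ENNReal.ofReal (M u - M t)) :
    ψ v ≤ ENNReal.ofReal m := by
  have h_right : 𝓝[>] t ≤ 𝓝[≠] t := nhdsWithin_mono t fun _ hu ↦ ne_of_gt hu
  have hf_slope := (hasDerivAt_iff_tendsto_slope.1 hf).mono_left h_right
  have hM_slope := (hasDerivAt_iff_tendsto_slope.1 hM).mono_left h_right
  refine hψlsc.isClosed_epigraph.mem_of_tendsto
    (hf_slope.prodMk_nhds (ENNReal.tendsto_ofReal hM_slope)) ?_
  filter_upwards [h, self_mem_nhdsWithin] with u hu htu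
  have h_pos : 0 < (u - t)⁻¹ := inv_pos.2 (sub_pos.2 htu)
  rw [slope_def_module, slope_def_module, smul_eq_mul, hψhom _ h_pos, ENNReal.ofReal_mul h_pos.le]
  gcongr

theorem convex_epigraph_ofReal (hψconv : IsConvexFunctional ψ) :
    Convex ℝ {p : E × ℝ | 0 ≤ p.2 ∧ ψ p.1 ≤ ENNReal.ofReal p.2} := by
  rintro ⟨u, x⟩ ⟨hx, hu⟩ ⟨v, y⟩ ⟨hy, hv⟩ α β hα hβ hαβ
  obtain rfl : β = 1 - α := by linarith
  have hαx : 0 ≤ α * x := mul_nonneg hα hx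
  have hβy : 0 ≤ (1 - α) * y := mul_nonneg hβ hy
  refine ⟨add_nonneg hαx hβy, (hψconv u v α ⟨hα, sub_nonneg.1 hβ⟩).trans ?_⟩
  calc ENNReal.ofReal α * ψ u + ENNReal.ofReal (1 - α) * ψ v
      ≤ ENNReal.ofReal α * ENNReal.ofReal x + ENNReal.ofReal (1 - α) * ENNReal.ofReal y := by
        gcongr
    _ = ENNReal.ofReal (α * x + (1 - α) * y) := by
        rw [ENNReal.ofReal_add hαx hβy, ENNReal.ofReal_mul hα, ENNReal.ofReal_mul hβ]

theorem isClosed_epigraph_ofReal {α : Type*} [TopologicalSpace α] {φ : α → ℝ≥0∞}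
    (hφ : LowerSemicontinuous φ) :
    IsClosed {p : α × ℝ | 0 ≤ p.2 ∧ φ p.1 ≤ ENNReal.ofReal p.2} :=
  (isClosed_le continuous_const continuous_snd).inter <|
    hφ.isClosed_epigraph.preimage
      (continuous_fst.prodMk (ENNReal.continuous_ofReal.comp continuous_snd))

variable [CompleteSpace E] {α : Type*} [MeasurableSpace α] {μ : Measure α} {g : α → E}

theorem map_integral_le_lintegral_of_isProbabilityMeasure [IsProbabilityMeasure μ]
    (hψconv : IsConvexFunctional ψ) (hψlsc : LowerSemicontinuous ψ) (hg : Integrable g μ) :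
    ψ (∫ x, g x ∂μ) ≤ ∫⁻ x, ψ (g x) ∂μ := by
  rcases eq_top_or_lt_top (∫⁻ x, ψ (g x) ∂μ) with h_top | h_fin
  · exact h_top ▸ le_top
  have h_meas := aemeasurable_comp_of_lowerSemicontinuous hψlsc hg.1
  have h_lt_top : ∀ᵐ x ∂μ, ψ (g x) < ⊤ := ae_lt_top' h_meas h_fin.ne
  have h_int : Integrable (fun x ↦ (ψ (g x)).toReal) μ :=
    integrable_toReal_of_lintegral_ne_top h_meas h_fin.ne
  have h_mem := (convex_epigraph_ofReal hψconv).integral_mem (isClosed_epigraph_ofReal hψlsc)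
    (f := fun x ↦ (g x, (ψ (g x)).toReal))
    (h_lt_top.mono fun x hx ↦ ⟨toReal_nonneg, (ofReal_toReal hx.ne).ge⟩) (hg.prodMk h_int)
  rw [integral_pair hg h_int, integral_toReal h_meas h_lt_top] at h_mem
  exact h_mem.2.trans_eq (ofReal_toReal h_fin.ne)

theorem map_integral_le_lintegral_of_homogeneous [IsFiniteMeasure μ] (hψ0 : ψ 0 = 0)
    (hψconv : IsConvexFunctional ψ) (hψhom : IsPosHomogeneous ψ)
    (hψlsc : LowerSemicontinuous ψ) (hg : Integrable g μ) :
    ψ (∫ x, g x ∂μ) ≤ ∫⁻ x, ψ (g x) ∂μ := by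
  rcases eq_zero_or_neZero μ with rfl | _
  · simp only [integral_zero_measure, hψ0, zero_le]
  calc ψ (∫ x, g x ∂μ) = ψ (μ.real univ • ⨍ x, g x ∂μ) := by rw [measure_smul_average]
    _ = μ univ * ψ (⨍ x, g x ∂μ) := by
        rw [hψhom _ measureReal_univ_pos, ofReal_measureReal]
    _ ≤ μ univ * ⨍⁻ x, ψ (g x) ∂μ := by
        gcongr
        exact map_integral_le_lintegral_of_isProbabilityMeasure hψconv hψlsc hg.to_average
    _ = ∫⁻ x, ψ (g x) ∂μ := measure_mul_laverage _ _

end Homogeneous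

section Equivalence

variable {E : Type*} [NormedAddCommGroup E] [NormedSpace ℝ E] [CompleteSpace E] {ψ : E → ℝ≥0∞}
  {a b c : ℝ} {f f' : ℝ → E}

theorem HasACDeriv.ae_le_ofReal {M m : ℝ → ℝ} (hf : HasACDeriv a b f f') (hM : HasACDeriv a b M m)
    (hψhom : IsPosHomogeneous ψ) (hψlsc : LowerSemicontinuous ψ)
    (h : ∀ s t, a ≤ s → s ≤ t → t ≤ b → ψ (f t - f s) ≤ ENNReal.ofReal (M t - M s)) :
    ∀ᵐ t, t ∈ Icc a b → ψ (f' t) ≤ ENNReal.ofReal (m t) := by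
  filter_upwards [hf.ae_hasDerivAt, hM.ae_hasDerivAt, ae_Icc_mem_nhds a b]
    with t hft hMt h_nhds ht
  refine le_ofReal_deriv_of_eventually_sub_le hψhom hψlsc (hft ht) (hMt ht) ?_
  filter_upwards [mem_nhdsWithin_of_mem_nhds (h_nhds ht), self_mem_nhdsWithin] with u hu htu
  exact h t u ht.1 (le_of_lt htu) hu.2

theorem exists_hasACDeriv_lintegral_lt_top
    (hrefl : Function.Surjective (NormedSpace.inclusionInDoubleDual ℝ E)) (hab : a ≤ b)
    (hc : 0 < c) (hψhom : IsPosHomogeneous ψ) (hψlsc : LowerSemicontinuous ψ)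
    (hψcoer : ∀ v : E, ENNReal.ofReal (c * ‖v‖) ≤ ψ v) {m : ℝ → ℝ}
    (hm : IntervalIntegrable m volume a b)
    (h : ∀ s t, a ≤ s → s ≤ t → t ≤ b → ψ (f t - f s) ≤ ENNReal.ofReal (∫ τ in s..t, m τ)) :
    ∃ f', HasACDeriv a b f f' ∧ ∫⁻ τ in Icc a b, ψ (f' τ) < ⊤ := by
  let M : ℝ → ℝ := fun t ↦ ∫ τ in a..t, m τ
  have hM : HasACDeriv a b M m :=
    ⟨hm, fun t _ ↦ by simp only [M, intervalIntegral.integral_same, zero_add]⟩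
  have hfM : ∀ s t, a ≤ s → s ≤ t → t ≤ b → ψ (f t - f s) ≤ ENNReal.ofReal (M t - M s) := by
    intro s t has hst htb
    rw [hM.sub_eq_integral ⟨has, hst.trans htb⟩ ⟨has.trans hst, htb⟩]
    exact h s t has hst htb
  obtain ⟨f', hf'⟩ := exists_hasACDeriv_of_absolutelyContinuousOnInterval hrefl <|
    absolutelyContinuousOnInterval_of_coercive_le hc hψcoer hab
      (hm.absolutelyContinuousOnInterval_intervalIntegral left_mem_uIcc) hfM
  refine ⟨f', hf', ?_⟩
  calc ∫⁻ τ in Icc a b, ψ (f' τ) ≤ ∫⁻ τ in Icc a b, ENNReal.ofReal (m τ) :=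
        setLIntegral_mono_ae' measurableSet_Icc (hf'.ae_le_ofReal hM hψhom hψlsc hfM)
    _ < ⊤ := ((intervalIntegrable_iff_integrableOn_Icc_of_le hab).1 hm).lintegral_lt_top

theorem HasACDeriv.exists_sub_le_integral (hf : HasACDeriv a b f f') (hab : a ≤ b)
    (hψ0 : ψ 0 = 0) (hψconv : IsConvexFunctional ψ) (hψhom : IsPosHomogeneous ψ)
    (hψlsc : LowerSemicontinuous ψ) (h_fin : ∫⁻ τ in Icc a b, ψ (f' τ) < ⊤) :
    ∃ m : ℝ → ℝ, (∀ τ, 0 ≤ m τ) ∧ IntervalIntegrable m volume a b ∧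
      ∀ s t, a ≤ s → s ≤ t → t ≤ b → ψ (f t - f s) ≤ ENNReal.ofReal (∫ τ in s..t, m τ) := by
  have hf'_int := (intervalIntegrable_iff_integrableOn_Icc_of_le hab).1 hf.1
  have h_meas := aemeasurable_comp_of_lowerSemicontinuous hψlsc hf'_int.1
  refine ⟨fun τ ↦ (ψ (f' τ)).toReal, fun _ ↦ toReal_nonneg,
    (intervalIntegrable_iff_integrableOn_Icc_of_le hab).2
      (integrable_toReal_of_lintegral_ne_top h_meas h_fin.ne), fun s t has hst htb ↦ ?_⟩
  have h_sub : Ioc s t ⊆ Icc a b := fun τ hτ ↦ ⟨has.trans hτ.1.le, hτ.2.trans htb⟩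
  rw [hf.sub_eq_integral ⟨has, hst.trans htb⟩ ⟨has.trans hst, htb⟩,
    intervalIntegral.integral_of_le hst, intervalIntegral.integral_of_le hst,
    integral_toReal (h_meas.mono_set h_sub)
      (ae_restrict_of_ae_restrict_of_subset h_sub (ae_lt_top' h_meas h_fin.ne)),
    ofReal_toReal ((lintegral_mono_set h_sub).trans_lt h_fin).ne]
  exact map_integral_le_lintegral_of_homogeneous hψ0 hψconv hψhom hψlsc (hf'_int.mono_set h_sub)

theorem stmt7_general
    (hrefl : Function.Surjective (NormedSpace.inclusionInDoubleDual ℝ E)) (hab : a ≤ b)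
    (hc : 0 < c) (hψ0 : ψ 0 = 0) (hψconv : IsConvexFunctional ψ) (hψhom : IsPosHomogeneous ψ)
    (hψlsc : LowerSemicontinuous ψ) (hψcoer : ∀ v : E, ENNReal.ofReal (c * ‖v‖) ≤ ψ v)
    {R : ℝ → E → ℝ≥0∞} {αl αu : ℝ} (hαl : 0 < αl)
    (hRlow : ∀ t ∈ Icc a b, ∀ v : E, ENNReal.ofReal αl * ψ v ≤ R t v)
    (hRup : ∀ t ∈ Icc a b, ∀ v : E, R t v ≤ ENNReal.ofReal αu * ψ v) (f : ℝ → E) :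
    List.TFAE [∃ f', HasACDeriv a b f f' ∧ ∫⁻ τ in Icc a b, R τ (f' τ) < ⊤,
      ∃ f', HasACDeriv a b f f' ∧ ∫⁻ τ in Icc a b, ψ (f' τ) < ⊤,
      ∃ m : ℝ → ℝ, (∀ τ, 0 ≤ m τ) ∧ IntervalIntegrable m volume a b ∧
        ∀ s t : ℝ, a ≤ s → s ≤ t → t ≤ b →
          ψ (f t - f s) ≤ ENNReal.ofReal (∫ τ in s..t, m τ)] := by
  tfae_have 1 ↔ 2 := exists_congr fun f' ↦ and_congr_right fun _ ↦
    lintegral_lt_top_iff_of_mul_le_of_le_mul (ofReal_pos.2 hαl).ne' ofReal_ne_top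
      (ae_restrict_of_forall_mem measurableSet_Icc fun τ hτ ↦ hRlow τ hτ (f' τ))
      (ae_restrict_of_forall_mem measurableSet_Icc fun τ hτ ↦ hRup τ hτ (f' τ))
  tfae_have 2 → 3
  | ⟨_, hf, h_fin⟩ => hf.exists_sub_le_integral hab hψ0 hψconv hψhom hψlsc h_fin
  tfae_have 3 → 2
  | ⟨_, _, hm, h⟩ => exists_hasACDeriv_lintegral_lt_top hrefl hab hc hψhom hψlsc hψcoer hm h
  tfae_finish

end Equivalence

theorem stmt7
    {X : Type*} [NormedAddCommGroup X] [NormedSpace ℝ X] [CompleteSpace X]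
    (hrefl : Function.Surjective (NormedSpace.inclusionInDoubleDual ℝ X))
    (a b : ℝ) (hab : a ≤ b)
    -- `ψ` is admissible
    (ψ : X → ℝ≥0∞) (c : ℝ) (hc : 0 < c)
    (hψ0 : ψ 0 = 0)
    (hψconv : ∀ u v : X, ∀ θ : ℝ, θ ∈ Icc (0:ℝ) 1 →
      ψ (θ • u + (1 - θ) • v) ≤ ENNReal.ofReal θ * ψ u + ENNReal.ofReal (1 - θ) * ψ v)
    (hψhom : ∀ l : ℝ, 0 < l → ∀ v : X, ψ (l • v) = ENNReal.ofReal l * ψ v)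
    (hψlsc : LowerSemicontinuous ψ)
    (hψcoer : ∀ v : X, ENNReal.ofReal (c * ‖v‖) ≤ ψ v)
    -- `R` is `ψ`-regular
    (R : ℝ → X → ℝ≥0∞) (αl αu : ℝ) (hαl : 0 < αl) (hαlu : αl ≤ αu)
    (hRconv : ∀ t ∈ Icc a b, ∀ u v : X, ∀ θ : ℝ, θ ∈ Icc (0:ℝ) 1 →
      R t (θ • u + (1 - θ) • v) ≤ ENNReal.ofReal θ * R t u + ENNReal.ofReal (1 - θ) * R t v)
    (hRhom : ∀ t ∈ Icc a b, ∀ l : ℝ, 0 < l → ∀ v : X, R t (l • v) = ENNReal.ofReal l * R t v)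
    (hRlsc : ∀ t ∈ Icc a b, LowerSemicontinuous (R t))
    (hR0 : ∀ t ∈ Icc a b, R t 0 = 0)
    (hRlow : ∀ t ∈ Icc a b, ∀ v : X, ENNReal.ofReal αl * ψ v ≤ R t v)
    (hRup : ∀ t ∈ Icc a b, ∀ v : X, R t v ≤ ENNReal.ofReal αu * ψ v)
    (σ : ℝ → ℝ) (hσcont : ContinuousOn σ (Icc 0 (b - a)))
    (hσmono : MonotoneOn σ (Icc 0 (b - a)))
    (hσ0 : σ 0 = 0) (hσnonneg : ∀ s : ℝ, 0 ≤ σ s)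
    (hRtime : ∀ s t : ℝ, a ≤ s → s ≤ t → t ≤ b → ∀ v : X, ψ v ≠ ⊤ →
      R t v ≤ R s v + ψ v * ENNReal.ofReal (σ (t - s)) ∧
        R s v ≤ R t v + ψ v * ENNReal.ofReal (σ (t - s)))
    (f : ℝ → X) :
    ((∃ f', HasACDeriv a b f f' ∧ (∫⁻ τ in Icc a b, R τ (f' τ)) < ⊤)
      ↔ (∃ f', HasACDeriv a b f f' ∧ (∫⁻ τ in Icc a b, ψ (f' τ)) < ⊤))
    ∧
    ((∃ f', HasACDeriv a b f f' ∧ (∫⁻ τ in Icc a b, R τ (f' τ)) < ⊤)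
      ↔ (∃ m : ℝ → ℝ, (∀ τ, 0 ≤ m τ) ∧ IntervalIntegrable m MeasureTheory.volume a b ∧
          ∀ s t : ℝ, a ≤ s → s ≤ t → t ≤ b →
            ψ (f t - f s) ≤ ENNReal.ofReal (∫ τ in s..t, m τ))) := by
  have h := stmt7_general hrefl hab hc hψ0 hψconv hψhom hψlsc hψcoer hαl hRlow hRup f
  exact ⟨h.out 0 1, h.out 0 2⟩
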